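/- Let (j_{0,k})_{k ≥ 1} denote the strictly increasing enumeration of the positive zeros of J_0, let (ω_k)_{k ≥ 1} be the strictly increasing enumeration of the set {j_{0,n}^2 − j_{0,p}^2 : p ∈ {1, 2, 3}, n ≥ p + 1}, and set ω_{−k} := −ω_k for k ≥ 1. Then for every T > 0 there exist constants 0 < m ≤ M such that for every finitely supported family (c_k)_{k ∈ ℤ, k ≠ 0} of complex numbers, m ∑_{k ≠ 0} |c_k|^2 ≤ ∫_0^T |∑_{k ≠ 0} c_k e^{i ω_k t}|^2 dt ≤ M ∑_{k ≠ 0} |c_k|^2. (Consequently the family {t ↦ e^{i ω_k t} : k ∈ ℤ, k ≠ 0} is a Riesz basis of the closure of its linear span in L^2((0,T); ℂ).) -/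

import Mathlib

open MeasureTheory Complex

/-- Bessel function of the first kind of integer order `ν`, defined by its
everywhere-convergent power series. -/
noncomputable def besselJ (ν : ℕ) (x : ℝ) : ℝ :=
  ∑' m : ℕ, ((-1 : ℝ) ^ m / ((Nat.factorial m : ℝ) * (Nat.factorial (m + ν) : ℝ)))
    * (x / 2) ^ (2 * m + ν)

lemma ps_deriv (a : ℕ → ℝ) (ha : ∀ m, |a m| ≤ 1 / (Nat.factorial m : ℝ)) (y : ℝ) :
    HasDerivAt (fun y : ℝ => ∑' m : ℕ, a m * y ^ m) (∑' m : ℕ, a m * (m * y ^ (m - 1))) y := by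
  set R := |y| + 1 with hR
  have hR0 : 0 < R := by positivity
  have hu : Summable (fun m : ℕ => (m : ℝ) * R ^ (m - 1) / (Nat.factorial m : ℝ)) := by
    rw [← summable_nat_add_iff 1]
    refine (Real.summable_pow_div_factorial R).congr fun m => ?_
    rw [Nat.factorial_succ]
    push_cast
    have : (m + 1 : ℝ) ≠ 0 := by positivity
    have : (m.factorial : ℝ) ≠ 0 := by positivity
    field_simp
  refine hasDerivAt_tsum_of_isPreconnected (t := Metric.ball 0 R) (y₀ := 0) (u := fun m : ℕ => (m : ℝ) * R ^ (m - 1) / (Nat.factorial m : ℝ)) hu Metric.isOpen_ball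
    (convex_ball 0 R).isPreconnected (fun m z _ => ((hasDerivAt_pow m z).const_mul (a m))) ?_ (by simp [hR0]) ?_ ?_
  · intro m z hz
    have hz' : |z| ≤ R := by
      have := mem_ball_zero_iff.1 hz
      exact this.le
    rw [Real.norm_eq_abs, abs_mul, abs_mul, abs_pow, Nat.abs_cast]
    calc |a m| * (m * |z| ^ (m - 1)) ≤ 1 / (Nat.factorial m : ℝ) * (m * R ^ (m - 1)) := by
          gcongr
          exact ha m
      _ = _ := by ring
  · refine summable_of_ne_finset_zero (s := {0}) ?_
    intro m hm
    simp at hm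
    simp [hm]
  · simp [hR]

noncomputable def ac (m : ℕ) : ℝ := (-1 : ℝ) ^ m / ((Nat.factorial m : ℝ) * (Nat.factorial m : ℝ))

noncomputable def BF (y : ℝ) : ℝ := ∑' m : ℕ, ac m * y ^ m
noncomputable def BG (y : ℝ) : ℝ := ∑' m : ℕ, (ac m * m) * y ^ m

lemma besselJ_eq (x : ℝ) : besselJ 0 x = BF ((x / 2) ^ 2) := by
  unfold besselJ BF ac
  refine tsum_congr fun m => ?_
  simp [pow_mul]

lemma ac_bound' (m : ℕ) : |ac m * m| ≤ 1 / (Nat.factorial m : ℝ) := by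
  have h1 : (1 : ℝ) ≤ Nat.factorial m := by exact_mod_cast Nat.succ_le_of_lt (Nat.factorial_pos m)
  have h2 : (m : ℝ) ≤ Nat.factorial m := by exact_mod_cast Nat.self_le_factorial m
  unfold ac
  rw [abs_mul, abs_div, abs_pow, abs_neg, abs_one, one_pow, abs_of_nonneg (by positivity), Nat.abs_cast, div_mul_eq_mul_div, one_mul, div_le_div_iff₀ (by positivity) (by positivity)]
  nlinarith

lemma ac_bound (m : ℕ) : |ac m| ≤ 1 / (Nat.factorial m : ℝ) := by
  have h1 : (1 : ℝ) ≤ Nat.factorial m := by exact_mod_cast Nat.succ_le_of_lt (Nat.factorial_pos m)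
  unfold ac
  rw [abs_div, abs_pow, abs_neg, abs_one, one_pow, abs_of_nonneg (by positivity), div_le_div_iff₀ (by positivity) (by positivity)]
  nlinarith

lemma BF_deriv (y : ℝ) (hy : 0 < y) : HasDerivAt BF (BG y / y) y := by
  have : HasDerivAt BF _ y := ps_deriv ac ac_bound y
  convert this using 1
  unfold BG
  rw [← tsum_div_const]
  refine tsum_congr fun m => ?_
  rcases m with _ | m
  · simp
  · simp [pow_succ]
    field_simp

lemma ps_summable (a : ℕ → ℝ) (ha : ∀ m, |a m| ≤ 1 / (Nat.factorial m : ℝ)) (y : ℝ) :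
    Summable (fun m : ℕ => a m * y ^ m) := by
  refine Summable.of_norm_bounded (Real.summable_pow_div_factorial |y|) fun m => ?_
  rw [Real.norm_eq_abs, abs_mul, abs_pow, div_eq_mul_inv, mul_comm, ← one_div]
  gcongr
  exact ha m

lemma BG_deriv (y : ℝ) : HasDerivAt BG (- BF y) y := by
  have : HasDerivAt BG _ y := ps_deriv (fun m => ac m * m) ac_bound' y
  convert this using 1
  have key : ∀ m : ℕ, ac (m + 1) * ((m + 1 : ℕ) : ℝ) * (((m + 1 : ℕ) : ℝ) * y ^ (m + 1 - 1)) = - (ac m * y ^ m) := by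
    intro m
    unfold ac
    rw [Nat.factorial_succ]
    push_cast
    have : (m + 1 : ℝ) ≠ 0 := by positivity
    have : (m.factorial : ℝ) ≠ 0 := by positivity
    simp [pow_succ]
    field_simp
  rw [Summable.tsum_eq_zero_add, tsum_congr key, tsum_neg]
  · simp [BF]
  · rw [← summable_nat_add_iff 1]
    exact (ps_summable ac ac_bound y).neg.congr fun m => (key m).symm

lemma BF_gap (a b : ℝ) (ha : 0 < a) (hab : a < b) (hFa : BF a = 0) (hFb : BF b = 0)
    (hne : ∃ x ∈ Set.Icc a b, BF x ≠ 0) : a ≤ (b - a) ^ 2 := by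
  have hc : ContinuousOn (fun x => |BF x|) (Set.Icc a b) := fun x hx =>
    ((BF_deriv x (ha.trans_le hx.1)).continuousAt.abs).continuousWithinAt
  obtain ⟨ξ, hξ, hmax⟩ := isCompact_Icc.exists_isMaxOn (Set.nonempty_Icc.2 hab.le) hc
  obtain ⟨x0, hx0, hx0'⟩ := hne
  set M := |BF ξ| with hM
  have hM0 : 0 < M := (abs_pos.2 hx0').trans_le (hmax hx0)
  have hmax' : ∀ x ∈ Set.Icc a b, |BF x| ≤ M := fun x hx => hmax hx
  have hξa : a < ξ := lt_of_le_of_ne hξ.1 (by rintro rfl; simp [hM, hFa] at hM0)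
  have hξb : ξ < b := lt_of_le_of_ne hξ.2 (by rintro rfl; simp [hM, hFb] at hM0)
  have hξ0 : 0 < ξ := ha.trans hξa
  have hext : IsLocalExtr BF ξ := by
    have hnhds : Set.Icc a b ∈ nhds ξ := Icc_mem_nhds hξa hξb
    rcases le_total 0 (BF ξ) with h | h
    · right
      filter_upwards [hnhds] with x hx
      have := hmax' x hx
      rw [hM, abs_of_nonneg h] at this
      exact (le_abs_self _).trans this
    · left
      filter_upwards [hnhds] with x hx
      have := hmax' x hx
      rw [hM, abs_of_nonpos h] at this
      have := (neg_le_abs (BF x)).trans this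
      linarith
  have hG0 : BG ξ = 0 := by
    have := hext.hasDerivAt_eq_zero (BF_deriv ξ hξ0)
    rcases div_eq_zero_iff.1 this with h | h
    · exact h
    · linarith
  have hG : ∀ x ∈ Set.Icc a b, |BG x| ≤ M * (b - a) := by
    intro x hx
    have := (convex_Icc a b).norm_image_sub_le_of_norm_hasDerivWithin_le (f := BG) (f' := fun x => - BF x) (C := M)
      (fun x _ => (BG_deriv x).hasDerivWithinAt) (fun x hx => by rw [norm_neg]; exact hmax' x hx) hξ hx
    rw [hG0, sub_zero, Real.norm_eq_abs, Real.norm_eq_abs] at this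
    refine this.trans ?_
    gcongr
    rw [abs_le]; constructor <;> linarith [hx.1, hx.2, hξ.1, hξ.2]
  have := (convex_Icc a b).norm_image_sub_le_of_norm_hasDerivWithin_le (f := BF) (f' := fun x => BG x / x) (C := M * (b - a) / a)
      (fun x hx => (BF_deriv x (ha.trans_le hx.1)).hasDerivWithinAt) (fun x hx => by
        rw [norm_div, Real.norm_eq_abs, Real.norm_eq_abs, abs_of_pos (ha.trans_le hx.1)]
        have h1 := hG x hx
        have h2 := hx.1
        have : 0 ≤ M * (b - a) := (abs_nonneg _).trans h1
        gcongr) (Set.left_mem_Icc.2 hab.le) hξ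
  rw [hFa, sub_zero, Real.norm_eq_abs, Real.norm_eq_abs, ← hM, abs_of_pos (by linarith)] at this
  have h3 : M * (b - a) / a * (ξ - a) ≤ M * (b - a) / a * (b - a) := by
    have : 0 ≤ b - a := by linarith
    gcongr
  have h4 : M ≤ M * ((b - a) ^ 2 / a) := by
    calc M ≤ _ := this.trans h3
      _ = _ := by ring
  have h5 : 1 ≤ (b - a) ^ 2 / a := by
    by_contra hlt
    push Not at hlt
    nlinarith
  rwa [one_le_div ha] at h5

lemma gaps_tendsto (j : ℕ → ℝ)
    (hj_pos : ∀ k, 1 ≤ k → 0 < j k)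
    (hj_mono : ∀ k l, 1 ≤ k → k < l → j k < j l)
    (hj_zero : ∀ k, 1 ≤ k → besselJ 0 (j k) = 0)
    (hj_surj : ∀ x : ℝ, 0 < x → besselJ 0 x = 0 → ∃ k, 1 ≤ k ∧ j k = x) (D : ℝ) :
    ∃ N : ℕ, 1 ≤ N ∧ ∀ n, N ≤ n → D ≤ j n ^ 2 ∧ D ≤ j (n + 1) ^ 2 - j n ^ 2 := by
  have gap : ∀ n, 1 ≤ n → j n ^ 2 / 4 ≤ (j (n + 1) ^ 2 / 4 - j n ^ 2 / 4) ^ 2 := by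
    intro n hn
    have h0 := hj_pos n hn
    have h1 := hj_mono n (n + 1) hn (by omega)
    have e : ∀ x : ℝ, (x / 2) ^ 2 = x ^ 2 / 4 := fun x => by ring
    refine BF_gap (j n ^ 2 / 4) (j (n + 1) ^ 2 / 4) (by positivity) (by nlinarith) ?_ ?_ ?_
    · rw [← e, ← besselJ_eq, hj_zero n hn]
    · rw [← e, ← besselJ_eq, hj_zero (n + 1) (by omega)]
    · set x := (j n + j (n + 1)) / 2 with hx
      have hx1 : j n < x := by linarith
      have hx2 : x < j (n + 1) := by linarith
      refine ⟨x ^ 2 / 4, ⟨by nlinarith, by nlinarith⟩, fun h => ?_⟩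
      rw [← e, ← besselJ_eq] at h
      obtain ⟨k, hk, hkx⟩ := hj_surj x (by linarith) h
      rcases lt_trichotomy k n with hkn | hkn | hkn
      · linarith [hj_mono k n hk hkn]
      · subst hkn; linarith
      · rcases Nat.lt_or_ge (n + 1) k with h2 | h2
        · linarith [hj_mono (n + 1) k (by omega) h2]
        · have : k = n + 1 := by omega
          subst this; linarith
  have gap' : ∀ n, 1 ≤ n → j n ≤ j (n + 1) ^ 2 - j n ^ 2 := by
    intro n hn
    have h0 := hj_pos n hn
    have h1 := hj_mono n (n + 1) hn (by omega)
    have := gap n hn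
    have h2 : 0 ≤ j (n + 1) ^ 2 - j n ^ 2 := by nlinarith
    by_contra hc
    push Not at hc
    nlinarith
  have hlin : ∀ n : ℕ, (n : ℝ) * j 1 ≤ j (n + 1) ^ 2 := by
    intro n
    induction n with
    | zero => simp; positivity
    | succ n ih =>
      have := gap' (n + 1) (by omega)
      have h1 : j 1 ≤ j (n + 1) := by
        rcases Nat.eq_zero_or_pos n with h | h
        · subst h; rfl
        · exact (hj_mono 1 (n + 1) le_rfl (by omega)).le
      push_cast
      linarith
  obtain ⟨N, hN⟩ := exists_nat_ge ((D ^ 2 + |D|) / j 1)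
  have hj1 := hj_pos 1 le_rfl
  refine ⟨N + 1, by omega, fun n hn => ?_⟩
  have h1 : D ^ 2 + |D| ≤ j n ^ 2 := by
    obtain ⟨k, rfl⟩ : ∃ k, n = k + 1 := ⟨n - 1, by omega⟩
    have : (N : ℝ) ≤ k := by exact_mod_cast (by omega : N ≤ k)
    rw [div_le_iff₀ hj1] at hN
    nlinarith [hlin k]
  have h2 := hj_pos n (by omega)
  refine ⟨by nlinarith [le_abs_self D], ?_⟩
  refine le_trans ?_ (gap' n (by omega))
  by_contra hc
  push Not at hc
  nlinarith [abs_nonneg D]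


noncomputable def ex (x t : ℝ) : ℂ := Complex.exp (Complex.I * (x : ℂ) * (t : ℂ))

lemma ex_cont (x : ℝ) : Continuous (ex x) := by unfold ex; fun_prop
lemma ex_cont' (t : ℝ) : Continuous (fun x => ex x t) := by unfold ex; fun_prop
lemma ex_add (x t h : ℝ) : ex x (t + h) = ex x t * ex x h := by
  unfold ex; rw [← Complex.exp_add]; push_cast; ring_nf
lemma ex_add' (x y t : ℝ) : ex (x + y) t = ex x t * ex y t := by
  unfold ex; rw [← Complex.exp_add]; push_cast; ring_nf
lemma ex_norm (x t : ℝ) : ‖ex x t‖ = 1 := by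
  unfold ex
  have : Complex.I * (x : ℂ) * (t : ℂ) = ((x * t : ℝ) : ℂ) * Complex.I := by push_cast; ring
  rw [this, Complex.norm_exp_ofReal_mul_I]
lemma ex_conj (x t : ℝ) : (starRingEnd ℂ) (ex x t) = ex (-x) t := by
  unfold ex
  rw [← Complex.exp_conj]
  simp

/-- exponential sum -/
noncomputable def es (s : Finset ℝ) (c : ℝ → ℂ) (t : ℝ) : ℂ := ∑ x ∈ s, c x * ex x t

lemma es_cont (s : Finset ℝ) (c : ℝ → ℂ) : Continuous (es s c) := by
  unfold es
  exact continuous_finsetSum _ fun x _ => continuous_const.mul (ex_cont x)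

lemma es_shift (s : Finset ℝ) (c : ℝ → ℂ) (h t : ℝ) :
    es s c (t + h) = es s (fun x => c x * ex x h) t := by
  unfold es
  refine Finset.sum_congr rfl fun x _ => ?_
  rw [ex_add]; ring

def SepR (S : Set ℝ) (δ : ℝ) : Prop := ∀ x ∈ S, ∀ y ∈ S, x ≠ y → δ ≤ |x - y|

def LB (S : Set ℝ) (T : ℝ) : Prop := ∃ m : ℝ, 0 < m ∧ ∀ s : Finset ℝ, (s : Set ℝ) ⊆ S → ∀ c : ℝ → ℂ,
  m * ∑ x ∈ s, ‖c x‖ ^ 2 ≤ ∫ t in (0 : ℝ)..T, ‖es s c t‖ ^ 2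

def UB (S : Set ℝ) (T : ℝ) : Prop := ∃ M : ℝ, 0 < M ∧ ∀ s : Finset ℝ, (s : Set ℝ) ⊆ S → ∀ c : ℝ → ℂ,
  ∫ t in (0 : ℝ)..T, ‖es s c t‖ ^ 2 ≤ M * ∑ x ∈ s, ‖c x‖ ^ 2

lemma sep_insert (S : Set ℝ) (δ : ℝ) (hδ : 0 < δ) (h : SepR S δ) (μ : ℝ) :
    ∃ δ' : ℝ, 0 < δ' ∧ SepR (insert μ S) δ' := by
  suffices hs : ∃ δ' : ℝ, 0 < δ' ∧ δ' ≤ δ ∧ ∀ x ∈ S, x ≠ μ → δ' ≤ |x - μ| by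
    obtain ⟨δ', h0, h1, h2⟩ := hs
    refine ⟨δ', h0, ?_⟩
    rintro x (rfl | hx) y (rfl | hy) hxy
    · exact absurd rfl hxy
    · rw [abs_sub_comm]; exact h2 y hy hxy.symm
    · exact h2 x hx hxy
    · exact h1.trans (h x hx y hy hxy)
  by_cases hex : ∃ y ∈ S, y ≠ μ ∧ |y - μ| < δ / 2
  · obtain ⟨y, hy, hyμ, hlt⟩ := hex
    refine ⟨|y - μ|, abs_pos.2 (sub_ne_zero.2 hyμ), by linarith, fun x hx hxμ => ?_⟩
    by_cases hxy : x = y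
    · rw [hxy]
    · have h1 := h x hx y hy hxy
      have h2 := abs_sub_le x μ y
      rw [abs_sub_comm μ y] at h2
      linarith
  · push Not at hex
    exact ⟨δ / 2, by linarith, by linarith, fun x hx hxμ => hex x hx hxμ⟩

lemma sq_add_le (a b : ℂ) : ‖a + b‖ ^ 2 ≤ 2 * ‖a‖ ^ 2 + 2 * ‖b‖ ^ 2 := by
  have := norm_add_le a b
  have h0 := norm_nonneg (a + b)
  nlinarith [sq_nonneg (‖a‖ - ‖b‖)]

lemma sq_sub_le (a b : ℂ) : ‖a - b‖ ^ 2 ≤ 2 * ‖a‖ ^ 2 + 2 * ‖b‖ ^ 2 := by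
  have := sq_add_le a (-b)
  rwa [norm_neg, ← sub_eq_add_neg] at this

lemma sinc_est (u0 : ℝ) (hu0 : 0 < u0) : ∃ κ : ℝ, 0 < κ ∧ ∀ u, u0 ≤ u → κ * u ≤ u - Real.sin u := by
  have h0 : Real.sin u0 < u0 := Real.sin_lt hu0
  refine ⟨min (1 / 2) ((u0 - Real.sin u0) / 2), lt_min (by norm_num) (by linarith), fun u hu => ?_⟩
  rcases le_total u 2 with h | h
  · have h1 : Real.sin u - Real.sin u0 ≤ u - u0 := by
      have := Real.abs_sin_sub_sin_le u u0
      rw [abs_of_nonneg (by linarith : 0 ≤ u - u0)] at this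
      exact (le_abs_self _).trans this
    have h2 := min_le_right (1 / 2 : ℝ) ((u0 - Real.sin u0) / 2)
    nlinarith
  · have h2 := min_le_left (1 / 2 : ℝ) ((u0 - Real.sin u0) / 2)
    have := Real.sin_le_one u
    nlinarith

lemma ex_diff (x μ h : ℝ) : ‖ex x h - ex μ h‖ ^ 2 = 2 - 2 * Real.cos ((x - μ) * h) := by
  have e : ex x h = ex μ h * ex (x - μ) h := by rw [← ex_add']; ring_nf
  have e2 : ex x h - ex μ h = ex μ h * (ex (x - μ) h - 1) := by rw [e]; ring
  rw [e2, norm_mul, ex_norm, one_mul, ← Complex.normSq_eq_norm_sq]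
  have : ex (x - μ) h = Complex.exp ((((x - μ) * h : ℝ) : ℂ) * Complex.I) := by
    unfold ex; push_cast; ring_nf
  rw [this, Complex.normSq_apply]
  simp only [Complex.sub_re, Complex.sub_im, Complex.exp_ofReal_mul_I_re, Complex.exp_ofReal_mul_I_im, Complex.one_re, Complex.one_im]
  nlinarith [Real.sin_sq_add_cos_sq ((x - μ) * h)]

lemma avg_est (δ ε : ℝ) (hδ : 0 < δ) (hε : 0 < ε) : ∃ κ : ℝ, 0 < κ ∧ ∀ x μ : ℝ, δ ≤ |x - μ| →
    κ ≤ ∫ h in (0 : ℝ)..ε, ‖ex x h - ex μ h‖ ^ 2 := by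
  obtain ⟨κ, hκ, H⟩ := sinc_est (δ * ε) (by positivity)
  refine ⟨2 * κ * ε, by positivity, fun x μ hx => ?_⟩
  set ν := x - μ with hν
  have hν0 : 0 < |ν| := hδ.trans_le hx
  have hcongr : ∀ h : ℝ, ‖ex x h - ex μ h‖ ^ 2 = 2 - 2 * Real.cos (|ν| * h) := by
    intro h
    rw [ex_diff]
    rcases abs_choice ν with h1 | h1 <;> rw [h1]
    rw [neg_mul, Real.cos_neg]
  simp_rw [hcongr]
  have hint : ∫ h in (0 : ℝ)..ε, (2 - 2 * Real.cos (|ν| * h)) = 2 * ε - 2 * (Real.sin (|ν| * ε) / |ν|) := by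
    have hd : ∀ h ∈ Set.uIcc 0 ε, HasDerivAt (fun h : ℝ => 2 * h - 2 * (Real.sin (|ν| * h) / |ν|)) (2 - 2 * Real.cos (|ν| * h)) h := by
      intro h _
      have h1 : HasDerivAt (fun h : ℝ => |ν| * h) |ν| h := by simpa using (hasDerivAt_id h).const_mul |ν|
      have h2 := (((h1.sin).div_const |ν|).const_mul 2)
      have h3 := ((hasDerivAt_id h).const_mul 2).sub h2
      have e : (2 : ℝ) - 2 * Real.cos (|ν| * h) = 2 * 1 - 2 * (Real.cos (|ν| * h) * |ν| / |ν|) := by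
        field_simp
      rw [e]
      exact h3
    rw [intervalIntegral.integral_eq_sub_of_hasDerivAt hd (by apply Continuous.intervalIntegrable; fun_prop)]
    simp
  rw [hint]
  have := H (|ν| * ε) (by gcongr)
  have h5 : κ * ε ≤ ε - Real.sin (|ν| * ε) / |ν| := by
    rw [le_sub_iff_add_le, ← le_sub_iff_add_le', div_le_iff₀ hν0]
    nlinarith
  linarith

lemma int_mono_sub (f : ℝ → ℝ) (hf : Continuous f) (h0 : ∀ t, 0 ≤ f t) (a b a' b' : ℝ) (h1 : a' ≤ a) (h2 : a ≤ b)
    (h3 : b ≤ b') : ∫ t in a..b, f t ≤ ∫ t in a'..b', f t :=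
  intervalIntegral.integral_mono_interval h1 h2 h3 (Filter.Eventually.of_forall h0) (hf.intervalIntegrable _ _)

lemma LB_insert (S : Set ℝ) (T T' δ : ℝ) (hT' : 0 < T') (hT : T' < T) (μ : ℝ) (hδ : 0 < δ)
    (hsep : ∀ x ∈ S, δ ≤ |x - μ|) (hlb : LB S T') (hub : UB S T) : LB (insert μ S) T := by
  obtain ⟨m, hm, hlb⟩ := hlb
  obtain ⟨M, hM, hub⟩ := hub
  obtain ⟨κ, hκ, hav⟩ := avg_est δ (T - T') hδ (by linarith)
  set ε := T - T' with hε
  have hε0 : 0 < ε := by linarith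
  have hμS : μ ∉ S := fun h => by
    have := hsep μ h
    simp at this
    linarith
  -- key estimate
  have key : ∀ s : Finset ℝ, (s : Set ℝ) ⊆ S → ∀ (c : ℝ → ℂ) (a : ℂ),
      m * κ * ∑ x ∈ s, ‖c x‖ ^ 2 ≤ ε * (4 * ∫ t in (0 : ℝ)..T, ‖a * ex μ t + es s c t‖ ^ 2) := by
    intro s hs c a
    set f : ℝ → ℂ := fun t => a * ex μ t + es s c t with hf
    have hfc : Continuous f := (continuous_const.mul (ex_cont μ)).add (es_cont s c)
    set I := ∫ t in (0 : ℝ)..T, ‖f t‖ ^ 2 with hI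
    have hfc2 : Continuous fun t => ‖f t‖ ^ 2 := by fun_prop
    have step : ∀ h ∈ Set.Icc 0 ε, m * ∑ x ∈ s, ‖c x‖ ^ 2 * ‖ex x h - ex μ h‖ ^ 2 ≤ 4 * I := by
      intro h hh
      have h1 := hlb s hs (fun x => c x * (ex x h - ex μ h))
      have e1 : ∀ t, es s (fun x => c x * (ex x h - ex μ h)) t = f (t + h) - ex μ h * f t := by
        intro t
        simp only [hf]
        rw [es_shift, ex_add]
        unfold es
        rw [mul_add, Finset.mul_sum]
        have : ∑ x ∈ s, c x * (ex x h - ex μ h) * ex x t = ∑ x ∈ s, c x * ex x h * ex x t - ∑ x ∈ s, ex μ h * (c x * ex x t) := by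
          rw [← Finset.sum_sub_distrib]
          exact Finset.sum_congr rfl fun x _ => by ring
        rw [this]; ring
      simp_rw [e1, norm_mul, mul_pow] at h1
      refine h1.trans ?_
      have hfs : Continuous fun t => ‖f (t + h)‖ ^ 2 := hfc2.comp (continuous_id.add continuous_const)
      have h2 : ∫ t in (0 : ℝ)..T', ‖f (t + h) - ex μ h * f t‖ ^ 2 ≤ ∫ t in (0 : ℝ)..T', (2 * ‖f (t + h)‖ ^ 2 + 2 * ‖f t‖ ^ 2) := by
        refine intervalIntegral.integral_mono_on hT'.le ?_ ?_ ?_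
        · apply Continuous.intervalIntegrable
          exact ((((hfc.comp (continuous_id.add continuous_const)).sub (continuous_const.mul hfc))).norm.pow 2)
        · apply Continuous.intervalIntegrable
          fun_prop
        · intro t _
          have := sq_sub_le (f (t + h)) (ex μ h * f t)
          rwa [norm_mul, ex_norm, one_mul] at this
      rw [intervalIntegral.integral_add (by apply Continuous.intervalIntegrable; fun_prop) (by apply Continuous.intervalIntegrable; fun_prop),
        intervalIntegral.integral_const_mul, intervalIntegral.integral_const_mul] at h2
      have h3 : ∫ t in (0 : ℝ)..T', ‖f (t + h)‖ ^ 2 ≤ I := by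
        rw [intervalIntegral.integral_comp_add_right (fun t => ‖f t‖ ^ 2)]
        exact int_mono_sub _ hfc2 (fun t => by positivity) _ _ _ _ (by linarith [hh.1]) (by linarith) (by linarith [hh.2])
      have h4 : ∫ t in (0 : ℝ)..T', ‖f t‖ ^ 2 ≤ I :=
        int_mono_sub _ hfc2 (fun t => by positivity) _ _ _ _ le_rfl hT'.le hT.le
      linarith
    have hcont : ∀ x, Continuous fun h => ‖ex x h - ex μ h‖ ^ 2 := fun x =>
      ((ex_cont x).sub (ex_cont μ)).norm.pow 2
    have hint := intervalIntegral.integral_mono_on (μ := volume) (a := 0) (b := ε) (f := fun h => m * ∑ x ∈ s, ‖c x‖ ^ 2 * ‖ex x h - ex μ h‖ ^ 2)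
      (g := fun _ => 4 * I) hε0.le (by
        apply Continuous.intervalIntegrable
        exact continuous_const.mul (continuous_finsetSum _ fun x _ => continuous_const.mul (hcont x))) (by simp) step
    rw [intervalIntegral.integral_const_mul, intervalIntegral.integral_finsetSum (f := fun x h => ‖c x‖ ^ 2 * ‖ex x h - ex μ h‖ ^ 2) (fun x _ =>
      (continuous_const.mul (hcont x)).intervalIntegrable _ _)] at hint
    simp only [intervalIntegral.integral_const_mul, intervalIntegral.integral_const, sub_zero, smul_eq_mul] at hint
    refine le_trans ?_ (hint.trans_eq (by ring))
    rw [mul_assoc, Finset.mul_sum]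
    refine mul_le_mul_of_nonneg_left (Finset.sum_le_sum fun x hx => ?_) hm.le
    have := hav x μ (hsep x (hs hx))
    rw [mul_comm]
    gcongr
  have hT0 : 0 < T := by linarith
  -- final constants
  set A := ε * 4 / (m * κ) with hA
  have hA0 : 0 < A := by positivity
  set B := (2 + 2 * M * A) / T with hB
  have hB0 : 0 < B := by positivity
  have key2 : ∀ s : Finset ℝ, (s : Set ℝ) ⊆ S → ∀ (c : ℝ → ℂ) (a : ℂ),
      ∑ x ∈ s, ‖c x‖ ^ 2 + ‖a‖ ^ 2 ≤ (A + B) * ∫ t in (0 : ℝ)..T, ‖a * ex μ t + es s c t‖ ^ 2 := by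
    intro s hs c a
    have h1 := key s hs c a
    have h2 := hub s hs c
    set I := ∫ t in (0 : ℝ)..T, ‖a * ex μ t + es s c t‖ ^ 2 with hI
    have h3 : ∑ x ∈ s, ‖c x‖ ^ 2 ≤ A * I := by
      rw [hA, div_mul_eq_mul_div, le_div_iff₀ (by positivity)]
      linarith
    have hfc : Continuous fun t => a * ex μ t + es s c t := (continuous_const.mul (ex_cont μ)).add (es_cont s c)
    have hec := es_cont s c
    have h4 : ∫ t in (0 : ℝ)..T, ‖a‖ ^ 2 ≤ ∫ t in (0 : ℝ)..T, (2 * ‖a * ex μ t + es s c t‖ ^ 2 + 2 * ‖es s c t‖ ^ 2) := by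
      refine intervalIntegral.integral_mono_on hT0.le (by simp) ?_ ?_
      · apply Continuous.intervalIntegrable
        fun_prop
      · intro t _
        have := sq_sub_le (a * ex μ t + es s c t) (es s c t)
        rwa [add_sub_cancel_right, norm_mul, ex_norm, mul_one] at this
    rw [intervalIntegral.integral_add (by apply Continuous.intervalIntegrable; fun_prop) (by apply Continuous.intervalIntegrable; fun_prop),
        intervalIntegral.integral_const_mul, intervalIntegral.integral_const_mul, ← hI] at h4
    simp only [intervalIntegral.integral_const, sub_zero, smul_eq_mul] at h4
    have h5 : ‖a‖ ^ 2 ≤ B * I := by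
      rw [hB, div_mul_eq_mul_div, le_div_iff₀ hT0]
      have : M * ∑ x ∈ s, ‖c x‖ ^ 2 ≤ M * (A * I) := by gcongr
      nlinarith
    linarith
  refine ⟨1 / (A + B), by positivity, fun s hs c => ?_⟩
  rw [one_div, inv_mul_le_iff₀ (by positivity)]
  by_cases hμ : μ ∈ s
  · have h1 := key2 (s.erase μ) (by
      intro x hx
      simp at hx
      rcases hs hx.1 with h | h
      · exact absurd h hx.2
      · exact h) c (c μ)
    rw [Finset.sum_erase_add _ _ hμ] at h1
    have e : ∀ t, c μ * ex μ t + es (s.erase μ) c t = es s c t := by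
      intro t
      unfold es
      exact Finset.add_sum_erase _ (fun x => c x * ex x t) hμ
    simp_rw [e] at h1
    exact h1
  · have h1 := key2 s (by
      intro x hx
      rcases hs hx with h | h
      · subst h; exact absurd hx hμ
      · exact h) c 0
    simpa using h1

lemma ker_bound (T : ℝ) (hT : 0 < T) (x : ℝ) :
    ‖∫ t in (0 : ℝ)..T, ((t * (T - t) : ℝ) : ℂ) * ex x t‖ ≤ (T ^ 3 + 4 * T) / (1 + x ^ 2) := by
  set K := ∫ t in (0 : ℝ)..T, ((t * (T - t) : ℝ) : ℂ) * ex x t with hK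
  have h1 : ‖K‖ ≤ T ^ 3 := by
    have := intervalIntegral.norm_integral_le_of_norm_le_const (a := 0) (b := T) (C := T ^ 2)
      (f := fun t => ((t * (T - t) : ℝ) : ℂ) * ex x t) (by
        intro t ht
        rw [Set.uIoc_of_le hT.le] at ht
        rw [norm_mul, ex_norm, mul_one, Complex.norm_real, Real.norm_eq_abs, abs_of_nonneg (mul_nonneg ht.1.le (by linarith [ht.2]))]
        nlinarith [ht.1, ht.2])
    rw [sub_zero, abs_of_pos hT] at this
    calc ‖K‖ ≤ T ^ 2 * T := this
      _ = T ^ 3 := by ring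
  have h2 : ‖(x : ℂ) ^ 2 * K‖ ≤ 4 * T := by
    have hexd : ∀ t : ℝ, HasDerivAt (ex x) (Complex.I * x * ex x t) t := by
      intro t
      have h := ((hasDerivAt_id t).ofReal_comp.const_mul (Complex.I * (x : ℂ))).cexp
      refine h.congr_deriv ?_
      simp only [id, Complex.ofReal_one, mul_one]
      unfold ex
      ring
    have hd : ∀ t ∈ Set.uIcc 0 T, HasDerivAt (fun t : ℝ => ((t * (T - t) : ℝ) : ℂ) * (- Complex.I * x) * ex x t + ((T - 2 * t : ℝ) : ℂ) * ex x t)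
        ((x : ℂ) ^ 2 * (((t * (T - t) : ℝ) : ℂ) * ex x t) - 2 * ex x t) t := by
      intro t _
      have g1 : HasDerivAt (fun t : ℝ => t * (T - t)) (T - 2 * t) t := by
        have := (hasDerivAt_id t).mul ((hasDerivAt_id t).const_sub T)
        refine this.congr_deriv ?_
        simp only [id]; ring
      have g2 : HasDerivAt (fun t : ℝ => T - 2 * t) (-2) t := by
        have := ((hasDerivAt_id t).const_mul 2).const_sub T
        refine this.congr_deriv ?_
        norm_num
      have g3 := ((g1.ofReal_comp.mul_const (- Complex.I * x)).mul (hexd t)).add (g2.ofReal_comp.mul (hexd t))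
      refine g3.congr_deriv ?_
      push_cast
      linear_combination (- (x : ℂ) ^ 2 * (t * (T - t)) * ex x t) * Complex.I_sq
    have hec := ex_cont x
    have hi1 : IntervalIntegrable (fun t : ℝ => (x : ℂ) ^ 2 * (((t * (T - t) : ℝ) : ℂ) * ex x t)) volume 0 T := by
      apply Continuous.intervalIntegrable; fun_prop
    have hi2 : IntervalIntegrable (fun t : ℝ => 2 * ex x t) volume 0 T := by
      apply Continuous.intervalIntegrable; fun_prop
    have hint := intervalIntegral.integral_eq_sub_of_hasDerivAt hd (hi1.sub hi2)
    rw [intervalIntegral.integral_sub hi1 hi2, intervalIntegral.integral_const_mul, ← hK] at hint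
    have e : (x : ℂ) ^ 2 * K = (((-T : ℝ) : ℂ) * ex x T - ((T : ℝ) : ℂ) * ex x 0) + ∫ t in (0 : ℝ)..T, 2 * ex x t := by
      rw [sub_eq_iff_eq_add] at hint
      rw [hint]
      simp
      ring
    rw [e]
    have n1 : ‖∫ t in (0 : ℝ)..T, 2 * ex x t‖ ≤ 2 * T := by
      have := intervalIntegral.norm_integral_le_of_norm_le_const (a := 0) (b := T) (C := 2)
        (f := fun t => 2 * ex x t) (by
          intro t ht
          rw [norm_mul, ex_norm]; simp)
      rwa [sub_zero, abs_of_pos hT] at this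
    have n2 : ‖((-T : ℝ) : ℂ) * ex x T - ((T : ℝ) : ℂ) * ex x 0‖ ≤ 2 * T := by
      refine (norm_sub_le _ _).trans ?_
      rw [norm_mul, norm_mul, ex_norm, ex_norm, Complex.norm_real, Complex.norm_real, norm_neg, Real.norm_eq_abs, abs_of_pos hT]
      linarith
    refine (norm_add_le _ _).trans ?_
    linarith
  rw [norm_mul, norm_pow, Complex.norm_real, Real.norm_eq_abs, sq_abs] at h2
  rw [le_div_iff₀ (by positivity)]
  linarith

lemma summ_int : Summable (fun k : ℤ => 1 / (1 + (k : ℝ) ^ 2)) := by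
  refine Summable.of_norm_bounded_eventually (g := fun k : ℤ => 1 / (k : ℝ) ^ 2) (Real.summable_one_div_int_pow.2 (by norm_num)) ?_
  refine (Set.finite_singleton (0 : ℤ)).subset ?_
  intro k hk
  by_contra hk0
  apply hk
  have hk1 : (k : ℝ) ≠ 0 := by exact_mod_cast hk0
  have : (0 : ℝ) < (k : ℝ) ^ 2 := by positivity
  show ‖1 / (1 + (k : ℝ) ^ 2)‖ ≤ 1 / (k : ℝ) ^ 2
  rw [Real.norm_eq_abs, abs_of_nonneg (by positivity)]
  exact one_div_le_one_div_of_le this (by linarith)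

lemma floor_est (δ : ℝ) (hδ : 0 < δ) (z : ℝ) :
    1 / (1 + z ^ 2) ≤ (3 + 2 / δ ^ 2) * (1 / (1 + (⌊z / δ⌋ : ℝ) ^ 2)) := by
  have h1 := Int.floor_le (z / δ)
  have h2 := Int.lt_floor_add_one (z / δ)
  set k : ℝ := (⌊z / δ⌋ : ℝ)
  set w := z / δ with hw
  have hz : z = w * δ := by rw [hw]; field_simp
  rw [mul_one_div, div_le_div_iff₀ (by positivity) (by positivity), hz]
  have e : (3 + 2 / δ ^ 2) * (1 + (w * δ) ^ 2) = 3 + 2 / δ ^ 2 + 3 * (w * δ) ^ 2 + 2 * w ^ 2 := by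
    field_simp; ring
  rw [e]
  have : 0 ≤ 2 / δ ^ 2 := by positivity
  nlinarith [sq_nonneg (w * δ), sq_nonneg (k - 2 * w), sq_nonneg (k - w)]

lemma sum_est (δ : ℝ) (hδ : 0 < δ) (S : Set ℝ) (hS : SepR S δ) (s : Finset ℝ) (hs : (s : Set ℝ) ⊆ S) (x : ℝ) :
    ∑ y ∈ s, 1 / (1 + (x - y) ^ 2) ≤ (3 + 2 / δ ^ 2) * ∑ k ∈ s.image (fun y => ⌊(x - y) / δ⌋), 1 / (1 + (k : ℝ) ^ 2) := by
  rw [Finset.sum_image, Finset.mul_sum]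
  · exact Finset.sum_le_sum fun y _ => floor_est δ hδ (x - y)
  · intro y hy z hz hyz
    by_contra hne
    have h1 := hS y (hs hy) z (hs hz) hne
    have h2 := Int.abs_sub_lt_one_of_floor_eq_floor hyz
    rw [← sub_div, abs_div, abs_of_pos hδ, div_lt_one hδ] at h2
    have : x - y - (x - z) = -(y - z) := by ring
    rw [this, abs_neg] at h2
    linarith

lemma sum_bdd (δ : ℝ) (hδ : 0 < δ) : ∃ B : ℝ, 0 < B ∧ ∀ S : Set ℝ, SepR S δ → ∀ s : Finset ℝ, (s : Set ℝ) ⊆ S → ∀ x : ℝ,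
    ∑ y ∈ s, 1 / (1 + (x - y) ^ 2) ≤ B := by
  have h0 : 0 ≤ ∑' k : ℤ, 1 / (1 + (k : ℝ) ^ 2) := tsum_nonneg fun k => by positivity
  refine ⟨(3 + 2 / δ ^ 2) * (∑' k : ℤ, 1 / (1 + (k : ℝ) ^ 2)) + 1, by positivity, fun S hS s hs x => ?_⟩
  refine (sum_est δ hδ S hS s hs x).trans ?_
  have := summ_int.sum_le_tsum (s.image (fun y => ⌊(x - y) / δ⌋)) (fun k _ => by positivity)
  have : (3 + 2 / δ ^ 2) * ∑ k ∈ s.image (fun y => ⌊(x - y) / δ⌋), 1 / (1 + (k : ℝ) ^ 2) ≤ (3 + 2 / δ ^ 2) * (∑' k : ℤ, 1 / (1 + (k : ℝ) ^ 2)) := by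
    gcongr
  linarith

lemma sum_small (δ ε : ℝ) (hδ : 0 < δ) (hε : 0 < ε) : ∃ D : ℝ, 1 ≤ D ∧ ∀ S : Set ℝ, SepR S δ → ∀ s : Finset ℝ, (s : Set ℝ) ⊆ S → ∀ x : ℝ,
    (∀ y ∈ s, D ≤ |x - y|) → ∑ y ∈ s, 1 / (1 + (x - y) ^ 2) ≤ ε := by
  set C := 3 + 2 / δ ^ 2 with hC
  have hC0 : 0 < C := by positivity
  obtain ⟨A, hA⟩ := summable_iff_vanishing_norm.1 summ_int (ε / C) (by positivity)
  set R : ℝ := ∑ k ∈ A, |(k : ℝ)| with hR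
  have hR0 : 0 ≤ R := Finset.sum_nonneg fun _ _ => abs_nonneg _
  refine ⟨δ * (R + 2) + 1, by nlinarith, fun S hS s hs x hx => ?_⟩
  refine (sum_est δ hδ S hS s hs x).trans ?_
  have h1 := hA (s.image (fun y => ⌊(x - y) / δ⌋)) (by
    rw [Finset.disjoint_left]
    intro k hk hkA
    obtain ⟨y, hy, rfl⟩ := Finset.mem_image.1 hk
    have h2 := hx y hy
    have h3 : |((⌊(x - y) / δ⌋ : ℤ) : ℝ)| ≤ R := Finset.single_le_sum (f := fun k : ℤ => |(k : ℝ)|) (fun _ _ => abs_nonneg _) hkA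
    have h4 := Int.floor_le ((x - y) / δ)
    have h5 := Int.lt_floor_add_one ((x - y) / δ)
    have h6 : R + 2 ≤ |(x - y) / δ| := by
      rw [abs_div, abs_of_pos hδ, le_div_iff₀ hδ]
      linarith
    rw [abs_le] at h3
    rcases le_abs.1 h6 with h | h <;> linarith [h3.1, h3.2])
  have h2 := (le_abs_self _).trans h1.le
  calc C * _ ≤ C * (ε / C) := by gcongr
    _ = ε := by field_simp

/-- weighted correlation -/
noncomputable def RR (T : ℝ) (c : ℝ → ℂ) (x y : ℝ) : ℝ :=
  ∫ t in (0 : ℝ)..T, t * (T - t) * ((c x * ex x t) * (starRingEnd ℂ) (c y * ex y t)).re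

lemma RR_bound (T : ℝ) (hT : 0 < T) (c : ℝ → ℂ) (x y : ℝ) :
    |RR T c x y| ≤ (T ^ 3 + 4 * T) * (‖c x‖ * ‖c y‖ * (1 / (1 + (x - y) ^ 2))) := by
  have hec := ex_cont (x - y)
  have e : RR T c x y = ((c x * (starRingEnd ℂ) (c y)) * ∫ t in (0 : ℝ)..T, ((t * (T - t) : ℝ) : ℂ) * ex (x - y) t).re := by
    rw [← intervalIntegral.integral_const_mul]
    have := Complex.reCLM.intervalIntegral_comp_comm (μ := volume) (a := 0) (b := T)
      (f := fun t : ℝ => (c x * (starRingEnd ℂ) (c y)) * (((t * (T - t) : ℝ) : ℂ) * ex (x - y) t))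
      (by apply Continuous.intervalIntegrable; fun_prop)
    rw [Complex.reCLM_apply] at this
    rw [← this]
    unfold RR
    refine intervalIntegral.integral_congr fun t _ => ?_
    simp only [Complex.reCLM_apply]
    rw [← Complex.re_ofReal_mul, map_mul, ex_conj, sub_eq_add_neg x y, ex_add']
    congr 1
    ring
  rw [e]
  refine (Complex.abs_re_le_norm _).trans ?_
  rw [norm_mul, norm_mul, RCLike.norm_conj]
  calc _ ≤ ‖c x‖ * ‖c y‖ * ((T ^ 3 + 4 * T) / (1 + (x - y) ^ 2)) := by
        gcongr
        exact ker_bound T hT (x - y)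
    _ = _ := by ring

lemma RR_sum (T : ℝ) (c : ℝ → ℂ) (s : Finset ℝ) :
    ∫ t in (0 : ℝ)..T, t * (T - t) * ‖es s c t‖ ^ 2 = ∑ x ∈ s, ∑ y ∈ s, RR T c x y := by
  have hc : ∀ x y, IntervalIntegrable (fun t : ℝ => t * (T - t) * ((c x * ex x t) * (starRingEnd ℂ) (c y * ex y t)).re) volume 0 T := by
    intro x y
    apply Continuous.intervalIntegrable
    have h1 := ex_cont x
    have h2 := ex_cont y
    have h3 : Continuous fun t => (starRingEnd ℂ) (c y * ex y t) := Complex.continuous_conj.comp (continuous_const.mul h2)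
    fun_prop
  unfold RR
  have e2 : ∀ x ∈ s, ∑ y ∈ s, (∫ t in (0 : ℝ)..T, t * (T - t) * ((c x * ex x t) * (starRingEnd ℂ) (c y * ex y t)).re)
     = ∫ t in (0 : ℝ)..T, ∑ y ∈ s, t * (T - t) * ((c x * ex x t) * (starRingEnd ℂ) (c y * ex y t)).re := by
    intro x _
    rw [intervalIntegral.integral_finsetSum (fun y _ => hc x y)]
  rw [Finset.sum_congr rfl e2, ← intervalIntegral.integral_finsetSum (fun x _ => by
    have := IntervalIntegrable.sum s (fun y _ => hc x y)
    have e3 : (fun t : ℝ => ∑ y ∈ s, t * (T - t) * ((c x * ex x t) * (starRingEnd ℂ) (c y * ex y t)).re) =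
      ∑ y ∈ s, fun t : ℝ => t * (T - t) * ((c x * ex x t) * (starRingEnd ℂ) (c y * ex y t)).re := by
      funext t
      simp only [Finset.sum_apply]
    rw [e3]
    exact this)]
  refine intervalIntegral.integral_congr fun t _ => ?_
  rw [← Complex.normSq_eq_norm_sq]
  have : Complex.normSq (es s c t) = (es s c t * (starRingEnd ℂ) (es s c t)).re := by
    rw [Complex.mul_conj, Complex.ofReal_re]
  rw [this]
  unfold es
  rw [map_sum, Finset.sum_mul_sum, Complex.re_sum, Finset.mul_sum]
  refine Finset.sum_congr rfl fun x _ => ?_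
  rw [Complex.re_sum, Finset.mul_sum]

/-- Schur test -/
lemma schur (s : Finset ℝ) (P : ℝ → ℝ → Prop) [∀ x y, Decidable (P x y)] (hP : ∀ x y, P x y → P y x) (a : ℝ → ℝ) (B : ℝ)
    (hB : ∀ x ∈ s, ∑ y ∈ s.filter (fun y => P x y), 1 / (1 + (x - y) ^ 2) ≤ B) :
    ∑ x ∈ s, ∑ y ∈ s.filter (fun y => P x y), a x * a y * (1 / (1 + (x - y) ^ 2)) ≤ B * ∑ x ∈ s, a x ^ 2 := by
  have h1 : ∑ x ∈ s, ∑ y ∈ s.filter (fun y => P x y), a x * a y * (1 / (1 + (x - y) ^ 2)) ≤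
      ∑ x ∈ s, ∑ y ∈ s.filter (fun y => P x y), (a x ^ 2 * (1 / (1 + (x - y) ^ 2)) / 2 + a y ^ 2 * (1 / (1 + (x - y) ^ 2)) / 2) := by
    refine Finset.sum_le_sum fun x _ => Finset.sum_le_sum fun y _ => ?_
    have : 0 ≤ 1 / (1 + (x - y) ^ 2) := by positivity
    nlinarith [mul_nonneg this (sq_nonneg (a x - a y))]
  have h2 : ∑ x ∈ s, ∑ y ∈ s.filter (fun y => P x y), a y ^ 2 * (1 / (1 + (x - y) ^ 2)) / 2 =
      ∑ x ∈ s, ∑ y ∈ s.filter (fun y => P x y), a x ^ 2 * (1 / (1 + (x - y) ^ 2)) / 2 := by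
    simp_rw [Finset.sum_filter]
    rw [Finset.sum_comm]
    refine Finset.sum_congr rfl fun x _ => Finset.sum_congr rfl fun y _ => ?_
    have : P x y ↔ P y x := ⟨hP _ _, hP _ _⟩
    simp only [this]
    rw [show (y - x) ^ 2 = (x - y) ^ 2 by ring]
  simp_rw [Finset.sum_add_distrib] at h1
  rw [h2] at h1
  refine h1.trans ?_
  rw [← Finset.sum_add_distrib, Finset.mul_sum]
  refine Finset.sum_le_sum fun x hx => ?_
  rw [← Finset.sum_div, ← Finset.mul_sum]
  have := mul_le_mul_of_nonneg_left (hB x hx) (sq_nonneg (a x))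
  linarith

lemma SepR_UB (S : Set ℝ) (δ : ℝ) (hδ : 0 < δ) (hS : SepR S δ) (T : ℝ) (hT : 0 < T) : UB S T := by
  obtain ⟨B, hB, H⟩ := sum_bdd δ hδ
  set T3 := 3 * T with hT3
  have hT30 : 0 < T3 := by positivity
  have key : ∀ s : Finset ℝ, (s : Set ℝ) ⊆ S → ∀ c : ℝ → ℂ,
      ∫ t in (0 : ℝ)..T3, t * (T3 - t) * ‖es s c t‖ ^ 2 ≤ (T3 ^ 3 + 4 * T3) * B * ∑ x ∈ s, ‖c x‖ ^ 2 := by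
    intro s hs c
    rw [RR_sum]
    have h1 := schur s (fun _ _ => True) (fun _ _ _ => trivial) (fun x => ‖c x‖) B (by
      intro x _
      rw [Finset.filter_true_of_mem (fun _ _ => trivial)]
      exact H S hS s hs x)
    simp only [Finset.filter_true] at h1
    calc ∑ x ∈ s, ∑ y ∈ s, RR T3 c x y ≤ ∑ x ∈ s, ∑ y ∈ s, (T3 ^ 3 + 4 * T3) * (‖c x‖ * ‖c y‖ * (1 / (1 + (x - y) ^ 2))) :=
          Finset.sum_le_sum fun x _ => Finset.sum_le_sum fun y _ => (le_abs_self _).trans (RR_bound T3 hT30 c x y)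
      _ = (T3 ^ 3 + 4 * T3) * ∑ x ∈ s, ∑ y ∈ s, (‖c x‖ * ‖c y‖ * (1 / (1 + (x - y) ^ 2))) := by
          simp_rw [Finset.mul_sum]
      _ ≤ (T3 ^ 3 + 4 * T3) * (B * ∑ x ∈ s, ‖c x‖ ^ 2) := by gcongr
      _ = _ := by ring
  refine ⟨(T3 ^ 3 + 4 * T3) * B / (2 * T ^ 2), by positivity, fun s hs c => ?_⟩
  have h1 := key s hs (fun x => c x * ex x (-T))
  simp_rw [norm_mul, ex_norm, mul_one, ← es_shift] at h1
  rw [div_mul_eq_mul_div, le_div_iff₀ (by positivity)]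
  refine le_trans ?_ h1
  have hec := es_cont s c
  have hec2 : Continuous fun t => es s c (t + -T) := hec.comp (by fun_prop)
  calc (∫ t in (0 : ℝ)..T, ‖es s c t‖ ^ 2) * (2 * T ^ 2) = ∫ t in T..(2 * T), 2 * T ^ 2 * ‖es s c (t + -T)‖ ^ 2 := by
        rw [intervalIntegral.integral_const_mul, intervalIntegral.integral_comp_add_right (fun t => ‖es s c t‖ ^ 2), mul_comm]
        congr 2 <;> ring
    _ ≤ ∫ t in T..(2 * T), t * (T3 - t) * ‖es s c (t + -T)‖ ^ 2 := by
        refine intervalIntegral.integral_mono_on (by linarith) ?_ ?_ ?_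
        · apply Continuous.intervalIntegrable; fun_prop
        · apply Continuous.intervalIntegrable; fun_prop
        · intro t ht
          have : 2 * T ^ 2 ≤ t * (T3 - t) := by rw [hT3]; nlinarith [ht.1, ht.2]
          gcongr
    _ ≤ _ := by
        refine intervalIntegral.integral_mono_interval hT.le (by linarith) (by linarith) ?_ ?_
        · refine (ae_restrict_iff' measurableSet_Ioc).2 (Filter.Eventually.of_forall fun t ht => ?_)
          have := ht.1.le
          have h2 : 0 ≤ T3 - t := by linarith [ht.2]
          simp only [Pi.zero_apply]
          positivity
        · apply Continuous.intervalIntegrable; fun_prop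

lemma LB_union (S : Set ℝ) (δ : ℝ) (hδ : 0 < δ) (hS : SepR S δ) (F : Finset ℝ) :
    ∃ δ' : ℝ, 0 < δ' ∧ SepR (S ∪ (F : Set ℝ)) δ' ∧ ∀ T' T : ℝ, 0 < T' → T' < T → LB S T' → LB (S ∪ (F : Set ℝ)) T := by
  induction F using Finset.induction_on with
  | empty =>
    refine ⟨δ, hδ, by simpa using hS, fun T' T h0 h1 hlb => ?_⟩
    obtain ⟨m, hm, H⟩ := hlb
    refine ⟨m, hm, fun s hs c => (H s (by simpa using hs) c).trans ?_⟩
    exact int_mono_sub (fun t => ‖es s c t‖ ^ 2) ((es_cont s c).norm.pow 2) (fun t => by positivity) _ _ _ _ le_rfl h0.le h1.le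
  | insert μ F _ ih =>
    obtain ⟨δ1, hδ1, hsep1, H⟩ := ih
    have hset : S ∪ ((insert μ F : Finset ℝ) : Set ℝ) = insert μ (S ∪ (F : Set ℝ)) := by
      rw [Finset.coe_insert, Set.union_insert]
    rw [hset]
    by_cases hμ : μ ∈ S ∪ (F : Set ℝ)
    · rw [Set.insert_eq_of_mem hμ]
      exact ⟨δ1, hδ1, hsep1, H⟩
    · obtain ⟨δ2, hδ2, hsep2⟩ := sep_insert _ δ1 hδ1 hsep1 μ
      refine ⟨δ2, hδ2, hsep2, fun T' T h0 h1 hlb => ?_⟩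
      have := H T' ((T' + T) / 2) h0 (by linarith) hlb
      refine LB_insert _ T ((T' + T) / 2) δ2 (by linarith) (by linarith) μ hδ2 ?_ this (SepR_UB _ δ1 hδ1 hsep1 T (by linarith))
      intro x hx
      exact hsep2 x (Or.inr hx) μ (Or.inl rfl) (fun h => hμ (h ▸ hx))

lemma LB_finite (F : Finset ℝ) (T : ℝ) (hT : 0 < T) : LB (F : Set ℝ) T := by
  obtain ⟨_, _, _, H⟩ := LB_union ∅ 1 one_pos (fun x hx => absurd hx (Set.notMem_empty x)) F
  rw [Set.empty_union] at H
  refine H (T / 2) T (by linarith) (by linarith) ⟨1, one_pos, fun s hs c => ?_⟩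
  have : s = ∅ := by
    rw [← Finset.coe_eq_empty]
    exact Set.subset_empty_iff.1 hs
  subst this
  simp [es]

lemma WLB_finite (F : Finset ℝ) (T : ℝ) (hT : 0 < T) : ∃ m : ℝ, 0 < m ∧ ∀ a : ℝ, ∀ s : Finset ℝ, (∀ x ∈ s, x - a ∈ F) → ∀ c : ℝ → ℂ,
    m * ∑ x ∈ s, ‖c x‖ ^ 2 ≤ ∫ t in (0 : ℝ)..T, t * (T - t) * ‖es s c t‖ ^ 2 := by
  obtain ⟨m, hm, H⟩ := LB_finite F (T / 2) (by linarith)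
  refine ⟨m * (T ^ 2 / 16), by positivity, fun a s hs c => ?_⟩
  have hinj : Set.InjOn (fun x => x - a) (s : Set ℝ) := fun x _ y _ h => by simpa using h
  have h1 := H (s.image (fun x => x - a)) (by
    intro z hz
    obtain ⟨x, hx, rfl⟩ := Finset.mem_image.1 (Finset.mem_coe.1 hz)
    exact hs x hx) (fun z => c (z + a) * ex (z + a) (T / 4))
  rw [Finset.sum_image hinj] at h1
  simp only [sub_add_cancel, norm_mul, ex_norm, mul_one] at h1
  have e : ∀ t, ‖es (s.image (fun x => x - a)) (fun z => c (z + a) * ex (z + a) (T / 4)) t‖ = ‖es s c (t + T / 4)‖ := by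
    intro t
    have : es s c (t + T / 4) = ex a t * es (s.image (fun x => x - a)) (fun z => c (z + a) * ex (z + a) (T / 4)) t := by
      rw [es_shift]
      unfold es
      rw [Finset.sum_image hinj, Finset.mul_sum]
      refine Finset.sum_congr rfl fun x _ => ?_
      have : ex x t = ex a t * ex (x - a) t := by rw [← ex_add']; ring_nf
      beta_reduce
      rw [this, sub_add_cancel]; ring
    rw [this, norm_mul, ex_norm, one_mul]
  simp_rw [e] at h1
  rw [intervalIntegral.integral_comp_add_right (fun t => ‖es s c t‖ ^ 2)] at h1
  have hec := es_cont s c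
  calc m * (T ^ 2 / 16) * ∑ x ∈ s, ‖c x‖ ^ 2 = (T ^ 2 / 16) * (m * ∑ x ∈ s, ‖c x‖ ^ 2) := by ring
    _ ≤ (T ^ 2 / 16) * ∫ t in (0 + T / 4)..(T / 2 + T / 4), ‖es s c t‖ ^ 2 := by gcongr
    _ = ∫ t in (0 + T / 4)..(T / 2 + T / 4), (T ^ 2 / 16) * ‖es s c t‖ ^ 2 := by
        rw [intervalIntegral.integral_const_mul]
    _ ≤ ∫ t in (0 + T / 4)..(T / 2 + T / 4), t * (T - t) * ‖es s c t‖ ^ 2 := by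
        refine intervalIntegral.integral_mono_on (by linarith) ?_ ?_ ?_
        · apply Continuous.intervalIntegrable; fun_prop
        · apply Continuous.intervalIntegrable; fun_prop
        · intro t ht
          have : T ^ 2 / 16 ≤ t * (T - t) := by nlinarith [ht.1, ht.2]
          gcongr
    _ ≤ _ := by
        refine intervalIntegral.integral_mono_interval (by linarith) (by linarith) (by linarith) ?_ ?_
        · refine (ae_restrict_iff' measurableSet_Ioc).2 (Filter.Eventually.of_forall fun t ht => ?_)
          have := ht.1.le
          have h2 : 0 ≤ T - t := by linarith [ht.2]
          simp only [Pi.zero_apply]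
          positivity
        · apply Continuous.intervalIntegrable; fun_prop

lemma cluster_LB (T δ m0 : ℝ) (hT : 0 < T) (hδ : 0 < δ) (hm0 : 0 < m0) : ∃ D : ℝ, 1 ≤ D ∧ ∀ S : Set ℝ, SepR S δ →
    ∀ cl : ℝ → ℕ × Bool, (∀ x ∈ S, ∀ y ∈ S, cl x ≠ cl y → D ≤ |x - y|) →
    (∀ s : Finset ℝ, (s : Set ℝ) ⊆ S → ∀ α, (∀ x ∈ s, cl x = α) → ∀ c : ℝ → ℂ,
      m0 * ∑ x ∈ s, ‖c x‖ ^ 2 ≤ ∫ t in (0 : ℝ)..T, t * (T - t) * ‖es s c t‖ ^ 2) → LB S T := by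
  classical
  set C := T ^ 3 + 4 * T with hC
  have hC0 : 0 < C := by positivity
  obtain ⟨D, hD, H⟩ := sum_small δ (m0 / (2 * C)) hδ (by positivity)
  refine ⟨D, hD, fun S hS cl hcl hm => ⟨m0 / 2 / T ^ 2, by positivity, fun s hs c => ?_⟩⟩
  have hw : m0 / 2 * ∑ x ∈ s, ‖c x‖ ^ 2 ≤ ∫ t in (0 : ℝ)..T, t * (T - t) * ‖es s c t‖ ^ 2 := by
    rw [RR_sum]
    have hsplit : ∑ x ∈ s, ∑ y ∈ s, RR T c x y = ∑ x ∈ s, ∑ y ∈ s.filter (fun y => cl y = cl x), RR T c x y +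
        ∑ x ∈ s, ∑ y ∈ s.filter (fun y => ¬ cl y = cl x), RR T c x y := by
      rw [← Finset.sum_add_distrib]
      exact Finset.sum_congr rfl fun x _ => (Finset.sum_filter_add_sum_filter_not s _ _).symm
    rw [hsplit]
    have hdiag : m0 * ∑ x ∈ s, ‖c x‖ ^ 2 ≤ ∑ x ∈ s, ∑ y ∈ s.filter (fun y => cl y = cl x), RR T c x y := by
      rw [← Finset.sum_fiberwise_of_maps_to (s := s) (t := s.image cl) (g := cl) (fun x hx => Finset.mem_image_of_mem _ hx)
          (fun x => ‖c x‖ ^ 2),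
        ← Finset.sum_fiberwise_of_maps_to (s := s) (t := s.image cl) (g := cl) (fun x hx => Finset.mem_image_of_mem _ hx)
          (fun x => ∑ y ∈ s.filter (fun y => cl y = cl x), RR T c x y), Finset.mul_sum]
      refine Finset.sum_le_sum fun α _ => ?_
      have h1 := hm (s.filter (fun x => cl x = α)) (fun x hx => hs (Finset.mem_of_mem_filter x hx)) α
        (fun x hx => (Finset.mem_filter.1 hx).2) c
      rw [RR_sum] at h1
      refine h1.trans_eq (Finset.sum_congr rfl fun x hx => ?_)
      rw [(Finset.mem_filter.1 hx).2]
    have hoff : - (m0 / 2 * ∑ x ∈ s, ‖c x‖ ^ 2) ≤ ∑ x ∈ s, ∑ y ∈ s.filter (fun y => ¬ cl y = cl x), RR T c x y := by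
      have h1 := schur s (fun x y => ¬ cl y = cl x) (fun x y h h' => h h'.symm) (fun x => ‖c x‖) (m0 / (2 * C)) (by
        intro x hx
        refine H S hS _ (fun y hy => hs (Finset.mem_of_mem_filter y hy)) x (fun y hy => ?_)
        have := Finset.mem_filter.1 hy
        exact hcl x (hs hx) y (hs this.1) (fun h => this.2 h.symm))
      have h2 : ∑ x ∈ s, ∑ y ∈ s.filter (fun y => ¬ cl y = cl x), -(C * (‖c x‖ * ‖c y‖ * (1 / (1 + (x - y) ^ 2)))) ≤
          ∑ x ∈ s, ∑ y ∈ s.filter (fun y => ¬ cl y = cl x), RR T c x y :=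
        Finset.sum_le_sum fun x _ => Finset.sum_le_sum fun y _ => (abs_le.1 (RR_bound T hT c x y)).1
      refine le_trans ?_ h2
      simp_rw [Finset.sum_neg_distrib, ← Finset.mul_sum]
      rw [neg_le_neg_iff]
      calc _ ≤ C * (m0 / (2 * C) * ∑ x ∈ s, ‖c x‖ ^ 2) := by
            refine mul_le_mul_of_nonneg_left ?_ hC0.le
            exact h1
        _ = _ := by field_simp
    linarith
  have hec := es_cont s c
  have h3 : ∫ t in (0 : ℝ)..T, t * (T - t) * ‖es s c t‖ ^ 2 ≤ ∫ t in (0 : ℝ)..T, T ^ 2 * ‖es s c t‖ ^ 2 := by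
    refine intervalIntegral.integral_mono_on hT.le ?_ ?_ ?_
    · apply Continuous.intervalIntegrable; fun_prop
    · apply Continuous.intervalIntegrable; fun_prop
    · intro t ht
      have : t * (T - t) ≤ T ^ 2 := by nlinarith [ht.1, ht.2]
      gcongr
  rw [intervalIntegral.integral_const_mul] at h3
  rw [div_mul_eq_mul_div, div_le_iff₀ (by positivity)]
  linarith

def sg (b : Bool) : ℝ := if b then 1 else -1

def FS (L : ℕ → ℝ) (N : ℕ) : Set ℝ :=
  {x | ∃ n : ℕ, N ≤ n ∧ ∃ p ∈ ({1, 2, 3} : Finset ℕ), ∃ b : Bool, x = sg b * (L n - L p)}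

lemma core (L : ℕ → ℝ) (hpos : 0 < L 1) (hmono : ∀ k l, 1 ≤ k → k < l → L k < L l)
    (hgap : ∀ D : ℝ, ∃ N : ℕ, 1 ≤ N ∧ ∀ n, N ≤ n → D ≤ L n ∧ D ≤ L (n + 1) - L n) (T : ℝ) (hT : 0 < T) :
    ∃ δ : ℝ, 0 < δ ∧ SepR (FS L 1) δ ∧ LB (FS L 1) T := by
  classical
  have h12 := hmono 1 2 (by norm_num) (by norm_num)
  have h23 := hmono 2 3 (by norm_num) (by norm_num)
  set δ := min (min (L 2 - L 1) (L 3 - L 2)) 1 with hδ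
  have hδ0 : 0 < δ := lt_min (lt_min (by linarith) (by linarith)) one_pos
  have hδa : δ ≤ L 2 - L 1 := (min_le_left _ _).trans (min_le_left _ _)
  have hδb : δ ≤ L 3 - L 2 := (min_le_left _ _).trans (min_le_right _ _)
  have hδc : δ ≤ 1 := min_le_right _ _
  have hp : ∀ p ∈ ({1, 2, 3} : Finset ℕ), 0 < L p ∧ L p ≤ L 3 := by
    intro p hp
    simp only [Finset.mem_insert, Finset.mem_singleton] at hp
    rcases hp with rfl | rfl | rfl <;> constructor <;> linarith
  have hpq : ∀ p ∈ ({1, 2, 3} : Finset ℕ), ∀ q ∈ ({1, 2, 3} : Finset ℕ), p ≠ q → δ ≤ |L p - L q| := by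
    intro p hp q hq hne
    simp only [Finset.mem_insert, Finset.mem_singleton] at hp hq
    rcases hp with rfl | rfl | rfl <;> rcases hq with rfl | rfl | rfl <;>
      first
      | exact absurd rfl hne
      | (rw [le_abs]; left; linarith)
      | (rw [le_abs]; right; linarith)
  set F0 : Finset ℝ := (({1, 2, 3} : Finset ℕ) ×ˢ (Finset.univ : Finset Bool)).image (fun q => - (sg q.2 * L q.1)) with hF0
  obtain ⟨m0, hm0, hW⟩ := WLB_finite F0 (T / 2) (by linarith)
  obtain ⟨D, hD, hcl⟩ := cluster_LB (T / 2) δ m0 (by linarith) hδ0 hm0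
  obtain ⟨N, hN1, hN⟩ := hgap (L 3 + D)
  -- cross separation
  have hLmono : ∀ n k, N ≤ n → n < k → L n + (L 3 + D) ≤ L k := by
    intro n k hn hk
    have h1 := (hN n hn).2
    rcases Nat.lt_or_ge (n + 1) k with h | h
    · linarith [hmono (n + 1) k (by omega) h]
    · have : k = n + 1 := by omega
      subst this; linarith
  have hcross : ∀ n k, N ≤ n → N ≤ k → ∀ p ∈ ({1, 2, 3} : Finset ℕ), ∀ q ∈ ({1, 2, 3} : Finset ℕ), ∀ b b' : Bool,
      (n, b) ≠ (k, b') → D ≤ |sg b * (L n - L p) - sg b' * (L k - L q)| := by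
    intro n k hn hk p hp' q hq' b b' hne
    have hp1 := hp p hp'
    have hq1 := hp q hq'
    have hn1 := (hN n hn).1
    have hk1 := (hN k hk).1
    have hnk : b = b' → n < k ∨ k < n := by
      rintro rfl
      by_contra hcon
      have : n = k := by omega
      exact hne (by rw [this])
    rcases b with _ | _ <;> rcases b' with _ | _ <;> simp only [sg, if_true, Bool.false_eq_true, if_false]
    · rcases hnk rfl with h | h
      · have := hLmono n k hn h
        rw [le_abs]; left; linarith
      · have := hLmono k n hk h
        rw [le_abs]; right; linarith
    · rw [le_abs]; right; linarith
    · rw [le_abs]; left; linarith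
    · rcases hnk rfl with h | h
      · have := hLmono n k hn h
        rw [le_abs]; right; linarith
      · have := hLmono k n hk h
        rw [le_abs]; left; linarith
  have hsepN : SepR (FS L N) δ := by
    rintro x ⟨n, hn, p, hp', b, rfl⟩ y ⟨k, hk, q, hq', b', rfl⟩ hxy
    by_cases h : (n, b) = (k, b')
    · obtain ⟨rfl, rfl⟩ := Prod.mk.inj h
      have hne : p ≠ q := fun h => hxy (by rw [h])
      have h1 := hpq p hp' q hq' hne
      have e : sg b * (L n - L p) - sg b * (L n - L q) = - (sg b * (L p - L q)) := by ring
      rw [e, abs_neg, abs_mul]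
      have : |sg b| = 1 := by unfold sg; split_ifs <;> simp
      rwa [this, one_mul]
    · linarith [hcross n k hn hk p hp' q hq' b b' h]
  -- labels
  have hlab : ∀ x : ℝ, ∃ α : ℕ × Bool, x ∈ FS L N → N ≤ α.1 ∧ ∃ p ∈ ({1, 2, 3} : Finset ℕ), x = sg α.2 * (L α.1 - L p) := by
    intro x
    by_cases hx : x ∈ FS L N
    · obtain ⟨n, hn, p, hp', b, h⟩ := hx
      exact ⟨(n, b), fun _ => ⟨hn, p, hp', h⟩⟩
    · exact ⟨(0, true), fun h => absurd h hx⟩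
  choose cl hcl' using hlab
  have hLBN : LB (FS L N) (T / 2) := by
    refine hcl (FS L N) hsepN cl ?_ ?_
    · intro x hx y hy hne
      obtain ⟨hn, p, hp', ex⟩ := hcl' x hx
      obtain ⟨hk, q, hq', ey⟩ := hcl' y hy
      have := hcross _ _ hn hk p hp' q hq' (cl x).2 (cl y).2 hne
      rwa [← ex, ← ey] at this
    · intro s hs α hα c
      refine hW (sg α.2 * L α.1) s ?_ c
      intro x hx
      obtain ⟨_, p, hp', ex⟩ := hcl' x (hs hx)
      rw [hα x hx] at ex
      rw [hF0, Finset.mem_image]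
      refine ⟨(p, α.2), by simp only [Finset.mem_product, Finset.mem_univ, and_true]; exact hp', ?_⟩
      rw [ex]; ring
  set F : Finset ℝ := ((Finset.range N) ×ˢ (({1, 2, 3} : Finset ℕ) ×ˢ (Finset.univ : Finset Bool))).image
    (fun q => sg q.2.2 * (L q.1 - L q.2.1)) with hF
  have hsub : FS L 1 ⊆ FS L N ∪ (F : Set ℝ) := by
    rintro x ⟨n, hn, p, hp', b, rfl⟩
    rcases Nat.lt_or_ge n N with h | h
    · right
      rw [hF, Finset.mem_coe, Finset.mem_image]
      exact ⟨(n, p, b), by simp only [Finset.mem_product, Finset.mem_univ, and_true, Finset.mem_range]; exact ⟨h, hp'⟩, rfl⟩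
    · left
      exact ⟨n, h, p, hp', b, rfl⟩
  obtain ⟨δ', hδ', hsep', H⟩ := LB_union (FS L N) δ hδ0 hsepN F
  refine ⟨δ', hδ', fun x hx y hy => hsep' x (hsub hx) y (hsub hy), ?_⟩
  obtain ⟨m, hm, H'⟩ := H (T / 2) T (by linarith) (by linarith) hLBN
  exact ⟨m, hm, fun s hs c => H' s (hs.trans hsub) c⟩

theorem stmt10 (j : ℕ → ℝ)
    (hj_pos : ∀ k, 1 ≤ k → 0 < j k)
    (hj_mono : ∀ k l, 1 ≤ k → k < l → j k < j l)
    (hj_zero : ∀ k, 1 ≤ k → besselJ 0 (j k) = 0)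
    (hj_surj : ∀ x : ℝ, 0 < x → besselJ 0 x = 0 → ∃ k, 1 ≤ k ∧ j k = x)
    (ω : ℕ → ℝ)
    (hω_mono : ∀ k, 1 ≤ k → ω k < ω (k + 1))
    (hω_mem : ∀ k, 1 ≤ k → ω k ∈
      {x : ℝ | ∃ p ∈ ({1, 2, 3} : Set ℕ), ∃ n, p + 1 ≤ n ∧ x = (j n) ^ 2 - (j p) ^ 2})
    (hω_surj : ∀ x ∈
      {x : ℝ | ∃ p ∈ ({1, 2, 3} : Set ℕ), ∃ n, p + 1 ≤ n ∧ x = (j n) ^ 2 - (j p) ^ 2},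
      ∃ k, 1 ≤ k ∧ ω k = x)
    (ωZ : ℤ → ℝ)
    (hωZ_pos : ∀ k : ℕ, 1 ≤ k → ωZ (k : ℤ) = ω k)
    (hωZ_neg : ∀ k : ℕ, 1 ≤ k → ωZ (-(k : ℤ)) = -ω k)
    (T : ℝ) (hT : 0 < T) :
    ∃ m M : ℝ, 0 < m ∧ m ≤ M ∧
      ∀ c : ℤ → ℂ, (Function.support c).Finite → c 0 = 0 →
        m * ∑' k : ℤ, ‖c k‖ ^ 2 ≤
          (∫ t in (0 : ℝ)..T,
            ‖∑' k : ℤ, c k * Complex.exp (Complex.I * (ωZ k : ℂ) * (t : ℂ))‖ ^ 2) ∧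
        (∫ t in (0 : ℝ)..T,
            ‖∑' k : ℤ, c k * Complex.exp (Complex.I * (ωZ k : ℂ) * (t : ℂ))‖ ^ 2) ≤
          M * ∑' k : ℤ, ‖c k‖ ^ 2 := by
  classical
  obtain ⟨δ, hδ, hsep, hlb⟩ := core (fun n => j n ^ 2) (by have := hj_pos 1 le_rfl; positivity)
    (fun k l hk hkl => by
      have h1 := hj_pos k hk
      have h2 := hj_mono k l hk hkl
      exact pow_lt_pow_left₀ h2 h1.le (by norm_num))
    (gaps_tendsto j hj_pos hj_mono hj_zero hj_surj) T hT
  obtain ⟨M, hM, hub⟩ := SepR_UB _ δ hδ hsep T hT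
  obtain ⟨m, hm, hlb⟩ := hlb
  have hp1 : ∀ p ∈ ({1, 2, 3} : Set ℕ), 1 ≤ p ∧ p ∈ ({1, 2, 3} : Finset ℕ) := by
    intro p hp
    simp only [Set.mem_insert_iff, Set.mem_singleton_iff] at hp
    rcases hp with rfl | rfl | rfl <;> simp
  have hωpos : ∀ k, 1 ≤ k → 0 < ω k := by
    intro k hk
    obtain ⟨p, hp, n, hn, h⟩ := hω_mem k hk
    have h1 := hj_pos p (hp1 p hp).1
    have h2 := hj_mono p n (hp1 p hp).1 (by omega)
    rw [h, sub_pos]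
    exact pow_lt_pow_left₀ h2 h1.le (by norm_num)
  have hωlt : ∀ k l, 1 ≤ k → k < l → ω k < ω l := by
    intro k l hk hkl
    induction l, hkl using Nat.le_induction with
    | base => exact hω_mono k hk
    | succ l hl ih => exact ih.trans (hω_mono l (by omega))
  have hωinj : ∀ k l, 1 ≤ k → 1 ≤ l → ω k = ω l → k = l := by
    intro k l hk hl h
    rcases lt_trichotomy k l with h1 | h1 | h1
    · linarith [hωlt k l hk h1]
    · exact h1
    · linarith [hωlt l k hl h1]
  have hcase : ∀ k : ℤ, k ≠ 0 → ∃ n : ℕ, 1 ≤ n ∧ (k = n ∨ k = -(n : ℤ)) := by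
    intro k hk
    exact ⟨k.natAbs, Int.natAbs_pos.2 hk, Int.natAbs_eq k⟩
  have hZinj : Set.InjOn ωZ {k | k ≠ 0} := by
    intro k hk l hl h
    obtain ⟨n, hn, hkn⟩ := hcase k hk
    obtain ⟨q, hq, hlq⟩ := hcase l hl
    have := hωpos n hn
    have := hωpos q hq
    rcases hkn with rfl | rfl <;> rcases hlq with rfl | rfl
    · rw [hωZ_pos n hn, hωZ_pos q hq] at h
      rw [hωinj n q hn hq h]
    · rw [hωZ_pos n hn, hωZ_neg q hq] at h
      linarith
    · rw [hωZ_neg n hn, hωZ_pos q hq] at h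
      linarith
    · rw [hωZ_neg n hn, hωZ_neg q hq] at h
      rw [hωinj n q hn hq (by linarith)]
  have hZmem : ∀ k : ℤ, k ≠ 0 → ωZ k ∈ FS (fun n => j n ^ 2) 1 := by
    intro k hk
    obtain ⟨n, hn, hkn⟩ := hcase k hk
    obtain ⟨p, hp, i, hi, h⟩ := hω_mem n hn
    rcases hkn with rfl | rfl
    · refine ⟨i, by omega, p, (hp1 p hp).2, true, ?_⟩
      rw [hωZ_pos n hn, h]; simp [sg]
    · refine ⟨i, by omega, p, (hp1 p hp).2, false, ?_⟩
      rw [hωZ_neg n hn, h]; simp [sg]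
  refine ⟨m, max m M, hm, le_max_left _ _, fun c hc hc0 => ?_⟩
  set A : Finset ℤ := hc.toFinset with hA
  have hA0 : ∀ k ∈ A, k ≠ 0 := by
    rintro k hk rfl
    rw [hA, Set.Finite.mem_toFinset] at hk
    exact hk hc0
  have hAn : ∀ k, k ∉ A → c k = 0 := by
    intro k hk
    rw [hA, Set.Finite.mem_toFinset] at hk
    simpa using hk
  set s : Finset ℝ := A.image ωZ with hs
  set c' : ℝ → ℂ := fun x => c (Function.invFunOn ωZ {k | k ≠ 0} x) with hc'
  have hinvc : ∀ k ∈ A, c' (ωZ k) = c k := by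
    intro k hk
    simp only [hc']
    rw [hZinj.leftInvOn_invFunOn (hA0 k hk)]
  have hAinj : Set.InjOn ωZ (A : Set ℤ) := hZinj.mono fun k hk => hA0 k hk
  have e1 : ∑' k : ℤ, ‖c k‖ ^ 2 = ∑ x ∈ s, ‖c' x‖ ^ 2 := by
    rw [tsum_eq_sum (s := A) (fun k hk => by simp [hAn k hk]), hs, Finset.sum_image hAinj]
    exact Finset.sum_congr rfl fun k hk => by rw [hinvc k hk]
  have e2 : ∀ t : ℝ, ∑' k : ℤ, c k * Complex.exp (Complex.I * (ωZ k : ℂ) * (t : ℂ)) = es s c' t := by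
    intro t
    rw [tsum_eq_sum (s := A) (fun k hk => by simp [hAn k hk])]
    unfold es ex
    rw [hs, Finset.sum_image hAinj]
    exact Finset.sum_congr rfl fun k hk => by rw [hinvc k hk]
  have hsub : (s : Set ℝ) ⊆ FS (fun n => j n ^ 2) 1 := by
    intro x hx
    obtain ⟨k, hk, rfl⟩ := Finset.mem_image.1 (Finset.mem_coe.1 hx)
    exact hZmem k (hA0 k hk)
  simp_rw [e2]
  rw [e1]
  refine ⟨hlb s hsub c', (hub s hsub c').trans ?_⟩
  have : 0 ≤ ∑ x ∈ s, ‖c' x‖ ^ 2 := Finset.sum_nonneg fun _ _ => by positivity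
  exact mul_le_mul_of_nonneg_right (le_max_right _ _) this
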